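/- Let n ≥ 2, 1 ≤ s < ∞, and let Ω ⊆ ℝⁿ be the block domain. Then Ω is an L^s-averaging domain if and only if s < n·log₂(3) − 1. -/

import Mathlib

open MeasureTheory Metric Set
open scoped ENNReal

/-- The normalized `L^s`-mean oscillation integral `(1/|E|) ∫_E |u - u_E|^s dz`. -/
noncomputable def lsAvgE {n : ℕ} (s : ℝ) (u : EuclideanSpace ℝ (Fin n) → ℝ)
    (E : Set (EuclideanSpace ℝ (Fin n))) : ℝ≥0∞ :=
  (volume E)⁻¹ * ∫⁻ z in E, ENNReal.ofReal (|u z - (⨍ y in E, u y)| ^ s)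

/-- `Ω` is an `L^s`-averaging domain: there is a finite constant `C` such that for every
locally integrable `u`, `((1/|Ω|) ∫_Ω |u - u_Ω|^s)^{1/s} ≤ C · sup_B ((1/|B|) ∫_B |u - u_B|^s)^{1/s}`,
the supremum over all open balls `B ⊆ Ω`. -/
def IsLsAveragingDomain {n : ℕ} (s : ℝ) (Ω : Set (EuclideanSpace ℝ (Fin n))) : Prop :=
  ∃ C : ℝ≥0∞, C ≠ ⊤ ∧ ∀ u : EuclideanSpace ℝ (Fin n) → ℝ,
    MeasureTheory.LocallyIntegrableOn u Ω volume →
      (lsAvgE s u Ω) ^ (1/s) ≤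
        C * ⨆ (x : EuclideanSpace ℝ (Fin n)) (ρ : ℝ) (_ : 0 < ρ ∧ ball x ρ ⊆ Ω),
          (lsAvgE s u (ball x ρ)) ^ (1/s)

/-- Edge length of the `m`-th cube of the block domain: `3^{-⌊log₂ m⌋}`. -/
noncomputable def blockEdge (m : ℕ) : ℝ := (1/3 : ℝ) ^ (Nat.log 2 m)

/-- Height of the bottom face of the `m`-th cube of the block domain. -/
noncomputable def blockBottom (m : ℕ) : ℝ := ∑ i ∈ Finset.Ico 1 m, blockEdge i

/-- The `m`-th closed cube of the block domain, of edge length `3^{-⌊log₂ m⌋}`, stacked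
along the first coordinate axis, centered on the common vertical axis through
`(·, 1/2, …, 1/2)`. -/
def blockCube (n : ℕ) [NeZero n] (m : ℕ) : Set (EuclideanSpace ℝ (Fin n)) :=
  {z | z 0 ∈ Set.Icc (blockBottom m) (blockBottom m + blockEdge m) ∧
    ∀ i : Fin n, i ≠ 0 → |z i - 1/2| ≤ blockEdge m / 2}

/-- The block domain: the interior of the union of the stacked cubes `Ω_m`, `m ≥ 1`. -/
def blockDomain (n : ℕ) [NeZero n] : Set (EuclideanSpace ℝ (Fin n)) :=
  interior (⋃ m ∈ Set.Ici 1, blockCube n m)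

/-! ### Averages -/

noncomputable def nrm {n : ℕ} (A : Set (EuclideanSpace ℝ (Fin n))) :
    Measure (EuclideanSpace ℝ (Fin n)) := (volume A)⁻¹ • volume.restrict A

lemma nrm_prob {n : ℕ} {A : Set (EuclideanSpace ℝ (Fin n))} (h0 : volume A ≠ 0)
    (h1 : volume A ≠ ⊤) : IsProbabilityMeasure (nrm A) := by
  constructor
  simp [nrm, ENNReal.inv_mul_cancel h0 h1]

lemma setavg_eq {n : ℕ} (A : Set (EuclideanSpace ℝ (Fin n))) (u : EuclideanSpace ℝ (Fin n) → ℝ) :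
    ⨍ y in A, u y = ∫ y, u y ∂(nrm A) := by
  rw [average_eq']; simp [nrm]

lemma nrm_aesm {n : ℕ} {A : Set (EuclideanSpace ℝ (Fin n))} {u : EuclideanSpace ℝ (Fin n) → ℝ}
    (h : AEStronglyMeasurable u (volume.restrict A)) : AEStronglyMeasurable u (nrm A) :=
  h.smul_measure _

lemma lsInt_eq {n : ℕ} {s : ℝ} (hs : 1 ≤ s) (A : Set (EuclideanSpace ℝ (Fin n)))
    (u : EuclideanSpace ℝ (Fin n) → ℝ) (c : ℝ) :
    ((volume A)⁻¹ * ∫⁻ z in A, ENNReal.ofReal (|u z - c| ^ s)) ^ (1/s)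
      = eLpNorm (fun z => u z - c) (ENNReal.ofReal s) (nrm A) := by
  have hs0 : 0 ≤ s := by linarith
  rw [eLpNorm_eq_lintegral_rpow_enorm_toReal (by simp; linarith) (by simp), nrm,
    ENNReal.toReal_ofReal hs0, lintegral_smul_measure]
  congr 2
  apply lintegral_congr
  intro z
  rw [Real.enorm_eq_ofReal_abs, ENNReal.ofReal_rpow_of_nonneg (abs_nonneg _) hs0]

lemma lsAvg_eq {n : ℕ} {s : ℝ} (hs : 1 ≤ s) (A : Set (EuclideanSpace ℝ (Fin n)))
    (u : EuclideanSpace ℝ (Fin n) → ℝ) :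
    (lsAvgE s u A) ^ (1/s)
      = eLpNorm (fun z => u z - ⨍ y in A, u y) (ENNReal.ofReal s) (nrm A) :=
  lsInt_eq hs A u _

lemma one_le_ofReal {s : ℝ} (hs : 1 ≤ s) : 1 ≤ ENNReal.ofReal s := by
  simpa using hs

lemma integrable_of_eLp {n : ℕ} {s : ℝ} (hs : 1 ≤ s) {A : Set (EuclideanSpace ℝ (Fin n))}
    (h0 : volume A ≠ 0) (h1 : volume A ≠ ⊤)
    {u : EuclideanSpace ℝ (Fin n) → ℝ} (hu : AEStronglyMeasurable u (volume.restrict A)) {c : ℝ}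
    (hM : eLpNorm (fun z => u z - c) (ENNReal.ofReal s) (nrm A) ≠ ⊤) :
    Integrable u (nrm A) := by
  have := nrm_prob h0 h1
  have : MemLp (fun z => u z - c) (ENNReal.ofReal s) (nrm A) :=
    ⟨(nrm_aesm hu).sub aestronglyMeasurable_const, hM.lt_top⟩
  have h2 : Integrable (fun z => u z - c) (nrm A) := this.integrable (one_le_ofReal hs)
  have e : u = (fun z => u z - c) + fun _ => c := by ext; simp
  rw [e]
  exact h2.add (integrable_const c)

lemma avg_edist {n : ℕ} {A : Set (EuclideanSpace ℝ (Fin n))}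
    (h0 : volume A ≠ 0) (h1 : volume A ≠ ⊤)
    {u : EuclideanSpace ℝ (Fin n) → ℝ} (hu : Integrable u (nrm A)) (c : ℝ) :
    edist (⨍ y in A, u y) c ≤ ∫⁻ z, ‖u z - c‖ₑ ∂(nrm A) := by
  have := nrm_prob h0 h1
  have : (⨍ y in A, u y) - c = ∫ y, (u y - c) ∂(nrm A) := by
    rw [integral_sub hu (integrable_const c), setavg_eq]; simp
  rw [edist_eq_enorm_sub, this]
  exact enorm_integral_le_lintegral_enorm _

lemma lint_le_eLp {n : ℕ} {s : ℝ} (hs : 1 ≤ s) {A : Set (EuclideanSpace ℝ (Fin n))}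
    (h0 : volume A ≠ 0) (h1 : volume A ≠ ⊤)
    {u : EuclideanSpace ℝ (Fin n) → ℝ} (hu : AEStronglyMeasurable u (volume.restrict A)) (c : ℝ) :
    ∫⁻ z, ‖u z - c‖ₑ ∂(nrm A) ≤ eLpNorm (fun z => u z - c) (ENNReal.ofReal s) (nrm A) := by
  have := nrm_prob h0 h1
  rw [← eLpNorm_one_eq_lintegral_enorm (f := fun z => u z - c)]
  exact eLpNorm_le_eLpNorm_of_exponent_le (one_le_ofReal hs)
    ((nrm_aesm hu).sub aestronglyMeasurable_const)

lemma nrm_le {n : ℕ} {A B : Set (EuclideanSpace ℝ (Fin n))} (hAB : A ⊆ B)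
    (h0 : volume B ≠ 0) (h1 : volume B ≠ ⊤) :
    nrm A ≤ (volume B / volume A) • nrm B := by
  unfold nrm
  rw [smul_smul, ENNReal.div_eq_inv_mul, mul_assoc, ENNReal.mul_inv_cancel h0 h1, mul_one]
  gcongr

lemma nested {n : ℕ} {s : ℝ} (hs : 1 ≤ s) {A B : Set (EuclideanSpace ℝ (Fin n))} (hAB : A ⊆ B)
    (hA0 : volume A ≠ 0) (h1 : volume B ≠ ⊤)
    {u : EuclideanSpace ℝ (Fin n) → ℝ} (hu : AEStronglyMeasurable u (volume.restrict B))
    {M : ℝ≥0∞} (hM : M ≠ ⊤) (hB : (lsAvgE s u B) ^ (1/s) ≤ M) :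
    edist (⨍ y in A, u y) (⨍ y in B, u y) ≤ volume B / volume A * M := by
  have h0 : volume B ≠ 0 := fun h => hA0 (measure_mono_null hAB h)
  have hA1 : volume A ≠ ⊤ := ne_top_of_le_ne_top h1 (measure_mono hAB)
  rw [lsAvg_eq hs] at hB
  have hi := integrable_of_eLp hs h0 h1 hu (ne_top_of_le_ne_top hM hB)
  have hi' : Integrable u (nrm A) :=
    Integrable.mono_measure (hi.smul_measure (ENNReal.div_ne_top h1 hA0)) (nrm_le hAB h0 h1)
  refine (avg_edist hA0 hA1 hi' _).trans ?_
  refine (lintegral_mono' (nrm_le hAB h0 h1) le_rfl).trans ?_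
  rw [lintegral_smul_measure, smul_eq_mul]
  gcongr
  exact (lint_le_eLp hs h0 h1 hu _).trans hB

lemma shift {n : ℕ} {s : ℝ} (hs : 1 ≤ s) {A : Set (EuclideanSpace ℝ (Fin n))}
    (h0 : volume A ≠ 0) (h1 : volume A ≠ ⊤)
    {u : EuclideanSpace ℝ (Fin n) → ℝ} (hu : AEStronglyMeasurable u (volume.restrict A))
    (a c : ℝ) :
    eLpNorm (fun z => u z - c) (ENNReal.ofReal s) (nrm A) ≤
      eLpNorm (fun z => u z - a) (ENNReal.ofReal s) (nrm A) + edist a c := by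
  have := nrm_prob h0 h1
  have : (fun z => u z - c) = (fun z => u z - a) + (fun _ => a - c) := by ext; simp
  rw [this]
  refine (eLpNorm_add_le (f := fun z => u z - a) ((nrm_aesm hu).sub aestronglyMeasurable_const)
    aestronglyMeasurable_const (one_le_ofReal hs)).trans ?_
  rw [eLpNorm_const _ (by simp; linarith) (IsProbabilityMeasure.ne_zero _)]
  rw [edist_eq_enorm_sub, measure_univ, ENNReal.one_rpow, mul_one]

lemma recenter {n : ℕ} {s : ℝ} (hs : 1 ≤ s) {A : Set (EuclideanSpace ℝ (Fin n))}
    (h0 : volume A ≠ 0) (h1 : volume A ≠ ⊤)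
    {u : EuclideanSpace ℝ (Fin n) → ℝ} (hu : AEStronglyMeasurable u (volume.restrict A))
    (c : ℝ) {K : ℝ≥0∞} (hKt : K ≠ ⊤)
    (hK : eLpNorm (fun z => u z - c) (ENNReal.ofReal s) (nrm A) ≤ K) :
    (lsAvgE s u A) ^ (1/s) ≤ 2 * K := by
  rw [lsAvg_eq hs, two_mul]
  refine (shift hs h0 h1 hu c _).trans ?_
  gcongr
  rw [edist_comm]
  exact (avg_edist h0 h1 (integrable_of_eLp hs h0 h1 hu (ne_top_of_le_ne_top hKt hK)) c).trans
    ((lint_le_eLp hs h0 h1 hu c).trans hK)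

lemma tonelli {n : ℕ} {Ω S T : Set (EuclideanSpace ℝ (Fin n))} {r : ℝ} (hr : 0 < r)
    (hS : MeasurableSet S) (hT : MeasurableSet T) (hST : ∀ x ∈ S, ball x r ⊆ T)
    (hSΩ : S ⊆ Ω) (hTΩ : ∀ y ∈ T, ball y r ⊆ Ω)
    {f : EuclideanSpace ℝ (Fin n) → ℝ≥0∞} (hf : AEMeasurable f (volume.restrict Ω))
    {K : ℝ≥0∞} (hK : ∀ y ∈ T, (volume (ball y r))⁻¹ * ∫⁻ x in ball y r, f x ≤ K) :
    ∫⁻ x in S, f x ≤ volume T * K := by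
  obtain ⟨g, hg, hfg⟩ := hf
  have hfgS : ∀ A ⊆ Ω, ∫⁻ x in A, f x = ∫⁻ x in A, g x := fun A hA =>
    lintegral_congr_ae (ae_mono (Measure.restrict_mono hA le_rfl) hfg)
  set V : ℝ≥0∞ := volume (ball (0 : EuclideanSpace ℝ (Fin n)) r) with hV
  have hV' : ∀ y : EuclideanSpace ℝ (Fin n), volume (ball y r) = V := fun y => by
    rw [hV, Measure.addHaar_ball_center]
  have hV0 : V ≠ 0 := (measure_ball_pos _ _ hr).ne'
  have hVt : V ≠ ⊤ := measure_ball_lt_top.ne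
  set D : Set (EuclideanSpace ℝ (Fin n) × EuclideanSpace ℝ (Fin n)) := {p | dist p.1 p.2 < r}
  have hD : MeasurableSet D := (isOpen_lt (by fun_prop) (by fun_prop)).measurableSet
  let F : EuclideanSpace ℝ (Fin n) → EuclideanSpace ℝ (Fin n) → ℝ≥0∞ :=
    fun x y => D.indicator (fun p => g p.1) (x, y)
  have hF : Measurable (Function.uncurry F) := (hg.comp measurable_fst).indicator hD
  have e1 : ∀ x ∈ S, ∫⁻ y in T, F x y = V * g x := by
    intro x hx
    have : ∀ y, F x y = (ball x r).indicator (fun _ => g x) y := by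
      intro y
      by_cases h : dist x y < r
      · have h' : y ∈ ball x r := by rwa [mem_ball, dist_comm]
        simp [F, D, indicator, h, dist_comm y x]
      · simp [F, D, indicator, h, dist_comm y x]
    simp_rw [this]
    rw [lintegral_indicator measurableSet_ball, lintegral_const,
      Measure.restrict_restrict measurableSet_ball, inter_eq_left.2 (hST x hx)]
    simp [hV', mul_comm]
  have e2 : ∀ y ∈ T, ∫⁻ x in S, F x y ≤ V * K := by
    intro y hy
    have : ∀ x, F x y = (ball y r).indicator g x := by
      intro x
      by_cases h : dist x y < r <;> simp [F, D, indicator, h]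
    simp_rw [this]
    calc ∫⁻ x in S, (ball y r).indicator g x ≤ ∫⁻ x, (ball y r).indicator g x :=
          setLIntegral_le_lintegral _ _
      _ = ∫⁻ x in ball y r, f x := by
          rw [lintegral_indicator measurableSet_ball, hfgS _ (hTΩ y hy)]
      _ ≤ V * K := by
          have := hK y hy
          rw [hV', ← ENNReal.div_eq_inv_mul, ENNReal.div_le_iff hV0 hVt] at this
          rwa [mul_comm]
  have : V * ∫⁻ x in S, f x ≤ V * (volume T * K) := by
    calc V * ∫⁻ x in S, f x = ∫⁻ x in S, V * g x := by
          rw [hfgS _ hSΩ, lintegral_const_mul _ hg]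
      _ = ∫⁻ x in S, ∫⁻ y in T, F x y := by
          apply setLIntegral_congr_fun hS
          intro x hx; exact (e1 x hx).symm
      _ = ∫⁻ y in T, ∫⁻ x in S, F x y := lintegral_lintegral_swap hF.aemeasurable
      _ ≤ ∫⁻ y in T, V * K := setLIntegral_mono' hT e2
      _ = V * (volume T * K) := by simp; ring
  exact (ENNReal.mul_le_mul_iff_right hV0 hVt).1 this

/-! ### Chains of balls -/

lemma q_le {n : ℕ} (z : EuclideanSpace ℝ (Fin n)) : ‖WithLp.ofLp z‖ ≤ ‖z‖ := by
  rw [pi_norm_le_iff_of_nonneg (norm_nonneg _)]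
  intro i
  exact PiLp.norm_apply_le z i

lemma norm_le_q {n : ℕ} (z : EuclideanSpace ℝ (Fin n)) : ‖z‖ ≤ n * ‖WithLp.ofLp z‖ := by
  have h : ‖z‖ ^ 2 ≤ (n * ‖WithLp.ofLp z‖) ^ 2 := by
    rw [EuclideanSpace.norm_sq_eq]
    calc ∑ i, ‖z i‖ ^ 2 ≤ ∑ i : Fin n, ‖WithLp.ofLp z‖ ^ 2 := by
          gcongr with i; exact norm_le_pi_norm (WithLp.ofLp z) i
      _ = n * ‖WithLp.ofLp z‖ ^ 2 := by simp
      _ ≤ (n : ℝ) ^ 2 * ‖WithLp.ofLp z‖ ^ 2 := by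
          gcongr
          rcases n with _ | n
          · simp
          · push_cast; nlinarith
      _ = _ := by ring
  exact abs_le_of_sq_le_sq' h (by positivity) |>.2

/-- Comparison of averages over nested balls. -/
def NestBd {n : ℕ} (Ω : Set (EuclideanSpace ℝ (Fin n))) (u : EuclideanSpace ℝ (Fin n) → ℝ)
    (M : ℝ≥0∞) : Prop :=
  ∀ x r x' r', 0 < r → 0 < r' → ball x' r' ⊆ ball x r → ball x r ⊆ Ω →
    edist (⨍ y in ball x' r', u y) (⨍ y in ball x r, u y) ≤ ENNReal.ofReal ((r / r') ^ n) * M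

lemma nestBd {n : ℕ} (hn : 2 ≤ n) {s : ℝ} (hs : 1 ≤ s) {Ω : Set (EuclideanSpace ℝ (Fin n))}
    {u : EuclideanSpace ℝ (Fin n) → ℝ} (hu : AEStronglyMeasurable u (volume.restrict Ω))
    {M : ℝ≥0∞} (hM : M ≠ ⊤)
    (hB : ∀ x r, 0 < r → ball x r ⊆ Ω → (lsAvgE s u (ball x r)) ^ (1/s) ≤ M) :
    NestBd Ω u M := by
  intro x r x' r' hr hr' hsub hΩ
  have : Nontrivial (EuclideanSpace ℝ (Fin n)) := by
    have : Nonempty (Fin n) := ⟨⟨0, by omega⟩⟩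
    infer_instance
  have h := nested hs hsub (measure_ball_pos volume x' hr').ne' measure_ball_lt_top.ne
    (hu.mono_set hΩ) hM (hB x r hr hΩ)
  refine h.trans (le_of_eq ?_)
  congr 1
  rw [Measure.addHaar_ball volume x hr.le, Measure.addHaar_ball volume x' hr'.le,
    ENNReal.mul_div_mul_right _ _ (measure_ball_pos volume _ one_pos).ne' measure_ball_lt_top.ne,
    ← ENNReal.ofReal_div_of_pos (by positivity), div_pow]
  simp

noncomputable def thet (n : ℕ) : ℝ := 1 - 1 / (2 * n)

lemma thet_lo {n : ℕ} (hn : 2 ≤ n) : 1 / 2 ≤ thet n := by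
  have : (2 : ℝ) ≤ n := by exact_mod_cast hn
  unfold thet
  have : 1 / (2 * (n : ℝ)) ≤ 1 / (2 * 1) := by gcongr; linarith
  linarith

lemma thet_hi {n : ℕ} (hn : 2 ≤ n) : thet n < 1 := by
  have : (2 : ℝ) ≤ n := by exact_mod_cast hn
  unfold thet
  have : 0 < 1 / (2 * (n : ℝ)) := by positivity
  linarith

lemma cube_chain {n : ℕ} (hn : 2 ≤ n) {Ω : Set (EuclideanSpace ℝ (Fin n))}
    {u : EuclideanSpace ℝ (Fin n) → ℝ} {M : ℝ≥0∞} (H : NestBd Ω u M)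
    (c : EuclideanSpace ℝ (Fin n)) {h : ℝ} (hh : 0 < h)
    (hc : ∀ z : EuclideanSpace ℝ (Fin n), ‖WithLp.ofLp (z - c)‖ < h → z ∈ Ω)
    (k : ℕ) : ∀ y : EuclideanSpace ℝ (Fin n), ‖WithLp.ofLp (y - c)‖ ≤ (1 - thet n ^ k) * h →
    edist (⨍ z in ball y (thet n ^ k * h / (2 * n)), u z) (⨍ z in ball c h, u z) ≤
      ENNReal.ofReal ((k + 1) * (2 * (4 * n) ^ n)) * M := by
  have hn' : (2 : ℝ) ≤ n := by exact_mod_cast hn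
  have ht := thet_lo hn
  have ht1 := thet_hi hn
  have ht0 : 0 < thet n := by linarith
  have hθ : n * (1 - thet n) = 1 / 2 := by unfold thet; field_simp; ring
  have hsub : ∀ (y : EuclideanSpace ℝ (Fin n)) (k : ℕ),
      ‖WithLp.ofLp (y - c)‖ ≤ (1 - thet n ^ k) * h → ball y (thet n ^ k * h) ⊆ Ω := by
    intro y k hy z hz
    apply hc
    have e : WithLp.ofLp (z - c) = WithLp.ofLp (z - y) + WithLp.ofLp (y - c) := by
      rw [← WithLp.ofLp_add]; congr 1; abel
    rw [e]
    have h1 := norm_add_le (WithLp.ofLp (z - y)) (WithLp.ofLp (y - c))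
    have h2 := q_le (z - y)
    rw [mem_ball, dist_eq_norm] at hz
    linarith
  induction k with
  | zero =>
    intro y hy
    have hy0 : y = c := by
      have : ‖WithLp.ofLp (y - c)‖ ≤ 0 := by simpa using hy
      have h2 := norm_le_q (y - c)
      have : ‖y - c‖ ≤ 0 := h2.trans (by nlinarith)
      exact sub_eq_zero.1 (norm_le_zero_iff.1 this)
    subst hy0
    have hsy := hsub y 0 hy
    have h3 := H y h y (thet n ^ 0 * h / (2 * n)) hh (by positivity)
      (ball_subset_ball (by
        rw [pow_zero, one_mul]; apply div_le_self hh.le; linarith)) (by simpa using hsy)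
    refine h3.trans ?_
    gcongr
    rw [show h / (thet n ^ 0 * h / (2 * n)) = 2 * n by field_simp]
    have : (2 * (n : ℝ)) ^ n ≤ (4 * n) ^ n := by gcongr; norm_num
    have : 0 ≤ (4 * (n : ℝ)) ^ n := by positivity
    push_cast; linarith
  | succ k ih =>
    intro y hy
    have hk0 : 0 < thet n ^ k := by positivity
    have hk1 : thet n ^ k ≤ 1 := pow_le_one₀ ht0.le ht1.le
    have hk2 : thet n ^ (k+1) < 1 := pow_lt_one₀ ht0.le ht1 (by omega)
    have hk3 : 0 < 1 - thet n ^ (k+1) := by linarith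
    have hk4 : thet n ^ (k+1) = thet n * thet n ^ k := by ring
    set a := (1 - thet n ^ k) / (1 - thet n ^ (k+1)) with ha
    have ha0 : 0 ≤ a := div_nonneg (by linarith) hk3.le
    have ha2 : a * (1 - thet n ^ (k+1)) = 1 - thet n ^ k := by
      rw [ha]; field_simp
    have ha1 : a ≤ 1 := by
      rw [ha, div_le_one hk3]; nlinarith
    set y' := c + a • (y - c) with hy'
    have e1 : y' - c = a • (y - c) := by rw [hy']; abel
    have q1 : ‖WithLp.ofLp (y' - c)‖ ≤ (1 - thet n ^ k) * h := by
      rw [e1, WithLp.ofLp_smul, norm_smul, Real.norm_of_nonneg ha0, ← ha2, mul_assoc]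
      gcongr
    have d1 : dist y y' ≤ thet n ^ k * h / 2 := by
      have e2 : y - y' = (1 - a) • (y - c) := by
        rw [hy', sub_smul, one_smul]; abel
      rw [dist_eq_norm, e2, norm_smul, Real.norm_of_nonneg (by linarith)]
      have := norm_le_q (y - c)
      calc (1 - a) * ‖y - c‖ ≤ (1 - a) * (n * ((1 - thet n ^ (k+1)) * h)) := by
            have : 0 ≤ 1 - a := by linarith
            gcongr
            exact (norm_le_q _).trans (by gcongr)
        _ = n * h * ((1 - thet n ^ (k+1)) - a * (1 - thet n ^ (k+1))) := by ring
        _ = n * (1 - thet n) * (thet n ^ k * h) := by rw [ha2, hk4]; ring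
        _ = _ := by rw [hθ]; ring
    have hS := hsub y' k q1
    have r0 : thet n ^ (k+1) * h / (2 * n) ≤ thet n ^ k * h / 2 := by
      rw [hk4, mul_assoc]
      rw [div_le_div_iff₀ (by positivity) (by positivity)]
      have : 0 < thet n ^ k * h := by positivity
      nlinarith
    have r1 : thet n ^ k * h / (2 * n) ≤ thet n ^ k * h :=
      div_le_self (by positivity) (by linarith)
    have t1 := H y' (thet n ^ k * h) y (thet n ^ (k+1) * h / (2 * n)) (by positivity)
      (by positivity) (ball_subset_ball' (by linarith)) hS
    have t2 := H y' (thet n ^ k * h) y' (thet n ^ k * h / (2 * n)) (by positivity)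
      (by positivity) (ball_subset_ball r1) hS
    have t3 := ih y' q1
    rw [show thet n ^ k * h / (thet n ^ (k+1) * h / (2 * n)) = 2 * n / thet n by
      rw [hk4]; field_simp] at t1
    rw [show thet n ^ k * h / (thet n ^ k * h / (2 * n)) = 2 * n by field_simp,
      edist_comm] at t2
    refine (edist_triangle4 _ _ _ _).trans ((add_le_add (add_le_add t1 t2) t3).trans ?_)
    rw [← add_mul, ← add_mul, ← ENNReal.ofReal_add (by positivity) (by positivity),
      ← ENNReal.ofReal_add (by positivity) (by positivity)]
    gcongr
    have b1 : (2 * (n : ℝ)) ^ n ≤ (4 * n) ^ n := by gcongr; norm_num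
    have b2 : (2 * (n : ℝ) / thet n) ^ n ≤ (4 * n) ^ n := by
      gcongr
      rw [div_le_iff₀ ht0]; nlinarith
    push_cast; linarith

/-! ### Geometry of the block domain -/

lemma vol_q_lt {n : ℕ} (c : EuclideanSpace ℝ (Fin n)) {h : ℝ} (hh : 0 < h) :
    volume {z : EuclideanSpace ℝ (Fin n) | ‖WithLp.ofLp (z - c)‖ < h} =
      ENNReal.ofReal ((2 * h) ^ n) := by
  have : {z : EuclideanSpace ℝ (Fin n) | ‖WithLp.ofLp (z - c)‖ < h} =
      WithLp.ofLp ⁻¹' (ball (WithLp.ofLp c) h) := by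
    ext z; simp [dist_eq_norm]
  rw [this, (PiLp.volume_preserving_ofLp (Fin n)).measure_preimage
    measurableSet_ball.nullMeasurableSet, Real.volume_pi_ball _ hh]
  simp

lemma vol_q_le {n : ℕ} (c : EuclideanSpace ℝ (Fin n)) {h : ℝ} (hh : 0 < h) :
    volume {z : EuclideanSpace ℝ (Fin n) | ‖WithLp.ofLp (z - c)‖ ≤ h} =
      ENNReal.ofReal ((2 * h) ^ n) := by
  have : {z : EuclideanSpace ℝ (Fin n) | ‖WithLp.ofLp (z - c)‖ ≤ h} =
      WithLp.ofLp ⁻¹' (closedBall (WithLp.ofLp c) h) := by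
    ext z; simp [dist_eq_norm]
  rw [this, (PiLp.volume_preserving_ofLp (Fin n)).measure_preimage
    measurableSet_closedBall.nullMeasurableSet, Real.volume_pi_closedBall _ hh.le]
  simp

lemma cont_q {n : ℕ} (c : EuclideanSpace ℝ (Fin n)) :
    Continuous fun z : EuclideanSpace ℝ (Fin n) => ‖WithLp.ofLp (z - c)‖ := by
  fun_prop

lemma q_ae {n : ℕ} (c : EuclideanSpace ℝ (Fin n)) {h : ℝ} (hh : 0 < h) :
    ({z : EuclideanSpace ℝ (Fin n) | ‖WithLp.ofLp (z - c)‖ < h} : Set _) =ᵐ[volume]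
      {z : EuclideanSpace ℝ (Fin n) | ‖WithLp.ofLp (z - c)‖ ≤ h} := by
  have hsub : {z : EuclideanSpace ℝ (Fin n) | ‖WithLp.ofLp (z - c)‖ < h} ⊆
      {z : EuclideanSpace ℝ (Fin n) | ‖WithLp.ofLp (z - c)‖ ≤ h} := by
    intro z hz
    rw [mem_ofPred_eq] at *
    exact hz.le
  apply ae_eq_of_subset_of_measure_ge hsub
  · rw [vol_q_lt c hh, vol_q_le c hh]
  · exact (isOpen_lt (cont_q c) continuous_const).measurableSet.nullMeasurableSet
  · rw [vol_q_le c hh]; exact ENNReal.ofReal_ne_top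

lemma vol_shell {n : ℕ} (hn : 2 ≤ n) (c : EuclideanSpace ℝ (Fin n)) {h : ℝ} (hh : 0 < h)
    {t : ℝ} (ht : 0 < t) :
    volume {z : EuclideanSpace ℝ (Fin n) | (1 - 2 * t) * h ≤ ‖WithLp.ofLp (z - c)‖ ∧
      ‖WithLp.ofLp (z - c)‖ < h} ≤ ENNReal.ofReal ((2 * h) ^ n * (2 * n * t)) := by
  have hn' : (2 : ℝ) ≤ n := by exact_mod_cast hn
  by_cases h1 : 1 - 2 * t ≤ 0
  · calc _ ≤ volume {z : EuclideanSpace ℝ (Fin n) | ‖WithLp.ofLp (z - c)‖ < h} :=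
          measure_mono (fun z hz => hz.2)
      _ = ENNReal.ofReal ((2 * h) ^ n) := vol_q_lt c hh
      _ ≤ _ := by
        apply ENNReal.ofReal_le_ofReal
        apply le_mul_of_one_le_right (by positivity)
        nlinarith
  · push Not at h1
    have hsub : {z : EuclideanSpace ℝ (Fin n) | (1 - 2 * t) * h ≤ ‖WithLp.ofLp (z - c)‖ ∧
      ‖WithLp.ofLp (z - c)‖ < h} ⊆ {z : EuclideanSpace ℝ (Fin n) | ‖WithLp.ofLp (z - c)‖ < h} \
        {z : EuclideanSpace ℝ (Fin n) | ‖WithLp.ofLp (z - c)‖ < (1 - 2 * t) * h} := by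
      intro z hz
      exact ⟨hz.2, fun hz' => absurd hz.1 (not_le.2 hz')⟩
    refine (measure_mono hsub).trans ?_
    have hp : 0 < (1 - 2 * t) * h := by positivity
    rw [measure_sdiff _ (isOpen_lt (cont_q c) continuous_const).measurableSet.nullMeasurableSet
      (by rw [vol_q_lt c hp]; exact ENNReal.ofReal_ne_top), vol_q_lt c hp, vol_q_lt c hh,
      ← ENNReal.ofReal_sub _ (by positivity)]
    · apply ENNReal.ofReal_le_ofReal
      have hb := one_add_mul_le_pow (a := -(2 * t)) (by linarith) n
      have e : (2 * ((1 - 2 * t) * h)) ^ n = (2 * h) ^ n * (1 + -(2 * t)) ^ n := by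
        rw [← mul_pow]; ring
      rw [e]
      have : 0 ≤ (2 * h) ^ n := by positivity
      nlinarith
    · intro z hz
      rw [mem_ofPred_eq] at *
      nlinarith

lemma edge_pos (m : ℕ) : 0 < blockEdge m := by unfold blockEdge; positivity

lemma bottom_succ {m : ℕ} (hm : 1 ≤ m) : blockBottom (m+1) = blockBottom m + blockEdge m := by
  unfold blockBottom
  rw [Finset.sum_Ico_succ_top hm]

lemma log_succ (m : ℕ) : Nat.log 2 (m+1) ≤ Nat.log 2 m + 1 := by
  rcases Nat.eq_zero_or_pos m with h | h
  · subst h; simp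
  · apply Nat.le_of_lt_succ
    apply Nat.log_lt_of_lt_pow (by omega)
    have := Nat.lt_pow_succ_log_self (b := 2) (by norm_num) m
    rw [Nat.succ_eq_add_one] at *
    rw [pow_succ]
    omega

lemma edge_le (m : ℕ) : blockEdge (m+1) ≤ blockEdge m := by
  unfold blockEdge
  apply pow_le_pow_of_le_one (by norm_num) (by norm_num)
  exact Nat.log_mono_right (by omega)

lemma edge_ge (m : ℕ) : blockEdge m ≤ 3 * blockEdge (m+1) := by
  unfold blockEdge
  have : (1/3 : ℝ) ^ (Nat.log 2 m + 1) ≤ (1/3 : ℝ) ^ (Nat.log 2 (m+1)) :=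
    pow_le_pow_of_le_one (by norm_num) (by norm_num) (log_succ m)
  rw [pow_succ] at this
  linarith

/-- Point on the axis. -/
noncomputable def axisPt (n : ℕ) [NeZero n] (t : ℝ) : EuclideanSpace ℝ (Fin n) :=
  WithLp.toLp 2 (fun i => if i = 0 then t else 1/2)

lemma axis_dist (n : ℕ) [NeZero n] (a b : ℝ) : dist (axisPt n a) (axisPt n b) = |a - b| := by
  rw [EuclideanSpace.dist_eq, Finset.sum_eq_single 0]
  · simp [axisPt, Real.dist_eq, Real.sqrt_sq_eq_abs]
  · intro i _ hi; simp [axisPt, hi]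
  · simp

lemma axis_zero (n : ℕ) [NeZero n] (a : ℝ) : (axisPt n a) 0 = a := by simp [axisPt]

lemma axis_ne (n : ℕ) [NeZero n] (a : ℝ) {i : Fin n} (hi : i ≠ 0) : (axisPt n a) i = 1/2 := by
  simp [axisPt, hi]

noncomputable def ctr (n : ℕ) [NeZero n] (m : ℕ) : EuclideanSpace ℝ (Fin n) :=
  axisPt n (blockBottom m + blockEdge m / 2)

lemma cube_eq (n : ℕ) [NeZero n] (m : ℕ) : blockCube n m =
    {z : EuclideanSpace ℝ (Fin n) | ‖WithLp.ofLp (z - ctr n m)‖ ≤ blockEdge m / 2} := by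
  have he := edge_pos m
  ext z
  simp only [blockCube, mem_ofPred_eq]
  rw [pi_norm_le_iff_of_nonneg (by positivity)]
  constructor
  · rintro ⟨h0, h⟩ i
    by_cases hi : i = 0
    · subst hi
      rw [WithLp.ofLp_sub, Pi.sub_apply, ctr, axis_zero, Real.norm_eq_abs, abs_le]
      constructor <;> linarith [h0.1, h0.2]
    · rw [WithLp.ofLp_sub, Pi.sub_apply, ctr, axis_ne _ _ hi]
      exact h i hi
  · intro h
    constructor
    · have := h 0
      rw [WithLp.ofLp_sub, Pi.sub_apply, ctr, axis_zero, Real.norm_eq_abs, abs_le] at this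
      constructor <;> linarith
    · intro i hi
      have := h i
      rw [WithLp.ofLp_sub, Pi.sub_apply, ctr, axis_ne _ _ hi] at this
      exact this

lemma sub_domain {n : ℕ} [NeZero n] {U : Set (EuclideanSpace ℝ (Fin n))} (hU : IsOpen U)
    (h : ∀ z ∈ U, ∃ m, 1 ≤ m ∧ z ∈ blockCube n m) : U ⊆ blockDomain n := by
  apply interior_maximal _ hU
  intro z hz
  obtain ⟨m, hm, hz⟩ := h z hz
  exact mem_biUnion (show m ∈ Set.Ici 1 from hm) hz

lemma domain_sub {n : ℕ} [NeZero n] {z : EuclideanSpace ℝ (Fin n)} (hz : z ∈ blockDomain n) :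
    ∃ m, 1 ≤ m ∧ z ∈ blockCube n m := by
  have := interior_subset hz
  simpa using this

lemma openCube_sub {n : ℕ} [NeZero n] {m : ℕ} (hm : 1 ≤ m) :
    {z : EuclideanSpace ℝ (Fin n) | ‖WithLp.ofLp (z - ctr n m)‖ < blockEdge m / 2} ⊆
      blockDomain n := by
  apply sub_domain (isOpen_lt (cont_q _) continuous_const)
  intro z hz
  rw [mem_ofPred_eq] at hz
  exact ⟨m, hm, by rw [cube_eq]; exact hz.le⟩

lemma ctrBall_sub {n : ℕ} [NeZero n] {m : ℕ} (hm : 1 ≤ m) :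
    ball (ctr n m) (blockEdge m / 2) ⊆ blockDomain n := by
  refine Subset.trans ?_ (openCube_sub hm)
  intro z hz
  rw [mem_ball, dist_eq_norm] at hz
  exact (q_le _).trans_lt hz

lemma coord_lt {n : ℕ} {z c : EuclideanSpace ℝ (Fin n)} {r : ℝ} (h : z ∈ ball c r) (i : Fin n) :
    |z i - c i| < r := by
  rw [mem_ball, dist_eq_norm] at h
  have := PiLp.norm_apply_le (z - c) i
  simp only [PiLp.sub_apply, Real.norm_eq_abs] at this
  linarith

lemma faceBall_sub {n : ℕ} [NeZero n] {m : ℕ} (hm : 1 ≤ m) :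
    ball (axisPt n (blockBottom (m+1))) (blockEdge (m+1) / 2) ⊆ blockDomain n := by
  apply sub_domain isOpen_ball
  intro z hz
  have h1 := edge_le m
  have h2 := edge_pos (m+1)
  have hb := bottom_succ hm
  have h0 := coord_lt hz 0
  rw [axis_zero, abs_lt] at h0
  have hi : ∀ i : Fin n, i ≠ 0 → |z i - 1/2| ≤ blockEdge (m+1) / 2 := by
    intro i hi
    have := coord_lt hz i
    rw [axis_ne _ _ hi] at this
    exact this.le
  rcases le_total (z 0) (blockBottom (m+1)) with h | h
  · refine ⟨m, hm, ⟨by constructor <;> linarith, fun i hi' => (hi i hi').trans (by linarith)⟩⟩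
  · exact ⟨m+1, by omega, ⟨by constructor <;> linarith, hi⟩⟩

lemma ctr_chain {n : ℕ} [NeZero n] {u : EuclideanSpace ℝ (Fin n) → ℝ} {M : ℝ≥0∞}
    (H : NestBd (blockDomain n) u M) {m : ℕ} (hm : 1 ≤ m) :
    edist (⨍ z in ball (ctr n m) (blockEdge m / 2), u z)
      (⨍ z in ball (ctr n 1) (blockEdge 1 / 2), u z) ≤ ENNReal.ofReal (m * (4 * 6 ^ n)) * M := by
  induction m, hm using Nat.le_induction with
  | base => simp
  | succ m hm ih =>
    have h1 := edge_le m
    have h3 := edge_ge m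
    have h2 := edge_pos (m+1)
    have h4 := edge_pos m
    have hb := bottom_succ hm
    set e := blockEdge (m+1) with he
    set p := blockBottom (m+1) with hp
    have t1 := H (ctr n (m+1)) (e/2) (axisPt n (p + e/4)) (e/4) (by linarith) (by linarith)
      (ball_subset_ball' (by
        rw [ctr, axis_dist, ← hp, ← he, abs_sub_comm, abs_of_nonneg] <;> linarith))
      (ctrBall_sub (by omega))
    have t2 := H (axisPt n p) (e/2) (axisPt n (p + e/4)) (e/4) (by linarith) (by linarith)
      (ball_subset_ball' (by
        rw [axis_dist, abs_of_nonneg] <;> linarith))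
      (faceBall_sub hm)
    have t3 := H (axisPt n p) (e/2) (axisPt n (p - e/4)) (e/4) (by linarith) (by linarith)
      (ball_subset_ball' (by
        rw [axis_dist, abs_sub_comm, abs_of_nonneg] <;> linarith))
      (faceBall_sub hm)
    have t4 := H (ctr n m) (blockEdge m /2) (axisPt n (p - e/4)) (e/4) (by linarith) (by linarith)
      (ball_subset_ball' (by
        rw [ctr, axis_dist, abs_of_nonneg] <;> linarith))
      (ctrBall_sub hm)
    have b : ∀ x : ℝ, 0 < x → x ≤ 3 * e → ENNReal.ofReal ((x / 2 / (e/4)) ^ n) * M ≤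
        ENNReal.ofReal (6 ^ n) * M := by
      intro x hx0 hx
      gcongr
      rw [div_le_iff₀ (by linarith)]; linarith
    have t1' := t1.trans (b e h2 (by linarith))
    have t2' := t2.trans (b e h2 (by linarith))
    have t3' := t3.trans (b e h2 (by linarith))
    have t4' := t4.trans (b _ h4 h3)
    rw [edist_comm] at t1' t3'
    refine ((edist_triangle _ _ _).trans (add_le_add t1' ((edist_triangle _ _ _).trans
      (add_le_add t2' ((edist_triangle _ _ _).trans (add_le_add t3' ((edist_triangle _ _ _).trans
      (add_le_add t4' ih)))))))).trans ?_
    simp only [← add_mul]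
    gcongr
    repeat rw [← ENNReal.ofReal_add (by positivity) (by positivity)]
    gcongr
    push_cast; linarith

/-! ### Sufficiency -/

lemma edge_rpow {m : ℕ} (hm : 1 ≤ m) : blockEdge m ≤ 3 * (m : ℝ) ^ (-Real.logb 2 3) := by
  have h1 := Nat.lt_pow_succ_log_self (b := 2) (by norm_num) m
  have hL : 0 < Real.logb 2 3 := Real.logb_pos (by norm_num) (by norm_num)
  have hm0 : (0 : ℝ) < m := by exact_mod_cast hm
  have h2 : (m : ℝ) ^ Real.logb 2 3 ≤ 3 ^ (Nat.log 2 m + 1) := by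
    have h1' : (m : ℝ) ≤ (2 : ℝ) ^ (Nat.log 2 m + 1) := by exact_mod_cast h1.le
    calc (m : ℝ) ^ Real.logb 2 3 ≤ ((2 : ℝ) ^ (Nat.log 2 m + 1)) ^ Real.logb 2 3 := by gcongr
      _ = ((2 : ℝ) ^ Real.logb 2 3) ^ (Nat.log 2 m + 1) := by
        rw [← Real.rpow_natCast, ← Real.rpow_natCast, ← Real.rpow_mul (by norm_num),
          ← Real.rpow_mul (by norm_num), mul_comm]
      _ = _ := by rw [Real.rpow_logb (by norm_num) (by norm_num) (by norm_num)]
  rw [Real.rpow_neg hm0.le, blockEdge, one_div, inv_pow, ← div_eq_mul_inv,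
    le_div_iff₀ (by positivity), inv_mul_le_iff₀ (by positivity)]
  rw [pow_succ] at h2
  exact h2

lemma summable_edge {n : ℕ} {s : ℝ} (hs : 1 ≤ s) (h : s < n * Real.logb 2 3 - 1) :
    Summable (fun i : ℕ => blockEdge (i+1) ^ n * ((i : ℝ) + 2) ^ s) := by
  have h0 : Summable (fun i : ℕ => (3 : ℝ) ^ n * 2 ^ s *
      (((i + 1 : ℕ) : ℝ)) ^ (s - n * Real.logb 2 3)) := by
    apply Summable.mul_left
    have := (Real.summable_nat_rpow (p := s - n * Real.logb 2 3)).2 (by linarith)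
    exact (summable_nat_add_iff 1).2 this
  refine Summable.of_nonneg_of_le (fun i => ?_) (fun i => ?_) h0
  · have := edge_pos (i+1); positivity
  · have h1 := edge_rpow (m := i+1) (by omega)
    have hp := edge_pos (i+1)
    set x : ℝ := ((i + 1 : ℕ) : ℝ) with hx
    have hx1 : 1 ≤ x := by rw [hx]; push_cast; linarith [(Nat.cast_nonneg i : (0:ℝ) ≤ i)]
    have hx2 : (i : ℝ) + 2 ≤ 2 * x := by
      rw [hx]; push_cast; linarith [(Nat.cast_nonneg i : (0:ℝ) ≤ i)]
    calc blockEdge (i+1) ^ n * ((i : ℝ) + 2) ^ s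
        ≤ (3 * x ^ (-Real.logb 2 3)) ^ n * (2 * x) ^ s := by gcongr
      _ = _ := by
        rw [mul_pow, Real.mul_rpow (by norm_num) (by linarith), ← Real.rpow_natCast (x ^ _),
          ← Real.rpow_mul (by linarith), sub_eq_add_neg, Real.rpow_add (by linarith)]
        rw [show -Real.logb 2 3 * n = -(n * Real.logb 2 3) by ring]
        ring

lemma summable_thet {n : ℕ} (hn : 2 ≤ n) (s : ℝ) :
    Summable (fun k : ℕ => thet n ^ k * ((k : ℝ) + 1) ^ s) := by
  have ht := thet_lo hn
  have ht1 := thet_hi hn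
  have ht0 : 0 < thet n := by linarith
  have h1 := summable_pow_mul_geometric_of_norm_lt_one (R := ℝ) ⌈s⌉₊ (r := thet n)
    (by rw [Real.norm_of_nonneg ht0.le]; exact ht1)
  have h2 := ((summable_nat_add_iff 1).2 h1).mul_left (thet n)⁻¹
  refine Summable.of_nonneg_of_le (fun k => by positivity) (fun k => ?_) h2
  have : ((k : ℝ) + 1) ^ s ≤ ((k : ℝ) + 1) ^ ⌈s⌉₊ := by
    rw [← Real.rpow_natCast]
    apply Real.rpow_le_rpow_of_exponent_le
    · linarith [(Nat.cast_nonneg k : (0:ℝ) ≤ k)]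
    · exact Nat.le_ceil s
  calc _ ≤ thet n ^ k * ((k : ℝ) + 1) ^ ⌈s⌉₊ := by gcongr
    _ = _ := by push_cast; field_simp; ring

lemma vol_cube (n : ℕ) [NeZero n] (m : ℕ) :
    volume (blockCube n m) = ENNReal.ofReal (blockEdge m ^ n) := by
  have := edge_pos m
  rw [cube_eq, vol_q_le _ (by positivity)]
  congr 2; ring

lemma domain_sub_iUnion (n : ℕ) [NeZero n] : blockDomain n ⊆ ⋃ i : ℕ, blockCube n (i+1) := by
  intro z hz
  obtain ⟨m, hm, hz⟩ := domain_sub hz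
  exact mem_iUnion.2 ⟨m-1, by rwa [Nat.sub_add_cancel hm]⟩

lemma logb_lower : 3/2 < Real.logb 2 3 := by
  rw [Real.lt_logb_iff_rpow_lt (by norm_num) (by norm_num)]
  have : ((2:ℝ) ^ (3/2 : ℝ)) ^ 2 < 3 ^ 2 := by
    rw [← Real.rpow_natCast, ← Real.rpow_mul (by norm_num)]
    norm_num
  exact lt_of_pow_lt_pow_left₀ 2 (by norm_num) this

lemma vol_domain_ne_top (n : ℕ) [NeZero n] (hn : 2 ≤ n) : volume (blockDomain n) ≠ ⊤ := by
  have hn' : (2 : ℝ) ≤ n := by exact_mod_cast hn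
  have hs := summable_edge (n := n) (s := 1) le_rfl (by nlinarith [logb_lower])
  refine ne_top_of_le_ne_top hs.tsum_ofReal_ne_top ?_
  refine (measure_mono (domain_sub_iUnion n)).trans ((measure_iUnion_le _).trans ?_)
  apply ENNReal.tsum_le_tsum
  intro i
  rw [vol_cube]
  apply ENNReal.ofReal_le_ofReal
  have := edge_pos (i+1)
  apply le_mul_of_one_le_right (by positivity)
  rw [Real.rpow_one]; linarith [(Nat.cast_nonneg i : (0:ℝ) ≤ i)]

lemma vol_domain_ne_zero (n : ℕ) [NeZero n] : volume (blockDomain n) ≠ 0 := by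
  intro h
  have := measure_mono_null (ctrBall_sub (n := n) (le_refl 1)) h
  exact (measure_ball_pos volume _ (by have := edge_pos 1; positivity)).ne' this

lemma cube_int {n : ℕ} [NeZero n] (hn : 2 ≤ n) {s : ℝ} (hs : 1 ≤ s)
    {u : EuclideanSpace ℝ (Fin n) → ℝ}
    (hu : AEStronglyMeasurable u (volume.restrict (blockDomain n)))
    {M : ℝ≥0∞} (hM : M ≠ ⊤)
    (hB : ∀ x r, 0 < r → ball x r ⊆ blockDomain n → (lsAvgE s u (ball x r)) ^ (1/s) ≤ M)
    {m : ℕ} (hm : 1 ≤ m) :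
    ∫⁻ z in blockCube n m,
      ENNReal.ofReal (|u z - ⨍ y in ball (ctr n 1) (blockEdge 1 / 2), u y| ^ s) ≤
    ∑' k : ℕ, ENNReal.ofReal (blockEdge m ^ n * (2 * n * thet n ^ k)) *
      (ENNReal.ofReal ((1 + 6 * (4 * n) ^ n + 4 * 6 ^ n) * (m + 1) * (k + 1)) * M) ^ s := by
  have hn' : (2 : ℝ) ≤ n := by exact_mod_cast hn
  have ht := thet_lo hn
  have ht1 := thet_hi hn
  have ht0 : 0 < thet n := by linarith
  have hθ : 1 / (2 * n) = 1 - thet n := by unfold thet; ring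
  have hs0 : 0 < s := by linarith
  have H := nestBd hn hs hu hM hB
  have he := edge_pos m
  set h := blockEdge m / 2 with hh
  have hp : 0 < h := by positivity
  have he2 : blockEdge m = 2 * h := by rw [hh]; ring
  set c := ctr n m with hc
  set c0 := ⨍ y in ball (ctr n 1) (blockEdge 1 / 2), u y with hc0
  set f : EuclideanSpace ℝ (Fin n) → ℝ≥0∞ := fun z => ENNReal.ofReal (|u z - c0| ^ s) with hf
  have hfm : AEMeasurable f (volume.restrict (blockDomain n)) := by
    have := hu.aemeasurable
    fun_prop
  let S : ℕ → Set (EuclideanSpace ℝ (Fin n)) := fun k =>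
    {z | (1 - thet n ^ k) * h ≤ ‖WithLp.ofLp (z - c)‖ ∧
      ‖WithLp.ofLp (z - c)‖ < (1 - thet n ^ (k+1)) * h}
  let T : ℕ → Set (EuclideanSpace ℝ (Fin n)) := fun k =>
    {z | (1 - 2 * thet n ^ k) * h ≤ ‖WithLp.ofLp (z - c)‖ ∧
      ‖WithLp.ofLp (z - c)‖ ≤ (1 - thet n ^ (k+2)) * h}
  have hΩ : ∀ z : EuclideanSpace ℝ (Fin n), ‖WithLp.ofLp (z - c)‖ < h → z ∈ blockDomain n :=
    fun z hz => openCube_sub hm hz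
  have hcov : {z : EuclideanSpace ℝ (Fin n) | ‖WithLp.ofLp (z - c)‖ < h} ⊆ ⋃ k, S k := by
    intro z hz
    rw [mem_ofPred_eq] at hz
    set t := 1 - ‖WithLp.ofLp (z - c)‖ / h with ht'
    have hq : ‖WithLp.ofLp (z - c)‖ = (1 - t) * h := by rw [ht']; field_simp; ring
    have t0 : 0 < t := by rw [ht', sub_pos, div_lt_one hp]; exact hz
    have t1 : t ≤ 1 := by rw [ht']; have : 0 ≤ ‖WithLp.ofLp (z - c)‖ / h := by positivity
                          linarith
    obtain ⟨k, hk1, hk2⟩ := exists_nat_pow_near_of_lt_one t0 t1 ht0 ht1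
    refine mem_iUnion.2 ⟨k, ?_⟩
    simp only [S, mem_ofPred_eq]
    rw [hq]
    constructor
    · gcongr
    · gcongr
  have hcube : ∫⁻ z in blockCube n m, f z ≤ ∑' k, ∫⁻ z in S k, f z := by
    rw [cube_eq, ← hc, ← hh, ← setLIntegral_congr (q_ae c hp)]
    exact (lintegral_mono_set hcov).trans (lintegral_iUnion_le _ _)
  refine hcube.trans (ENNReal.tsum_le_tsum fun k => ?_)
  have hk0 : 0 < thet n ^ k := by positivity
  set r := thet n ^ (k+2) * h / (2 * n) with hr
  have hr0 : 0 < r := by positivity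
  have hr1 : r = thet n ^ (k+2) * h * (1 - thet n) := by rw [hr, ← hθ]; ring
  have hTΩ : ∀ y ∈ T k, ball y r ⊆ blockDomain n := by
    intro y hy z hz
    simp only [T, mem_ofPred_eq] at hy
    apply hΩ
    have e : WithLp.ofLp (z - c) = WithLp.ofLp (z - y) + WithLp.ofLp (y - c) := by
      rw [← WithLp.ofLp_add]; congr 1; abel
    rw [e]
    have h1 := norm_add_le (WithLp.ofLp (z - y)) (WithLp.ofLp (y - c))
    have h2 := q_le (z - y)
    rw [mem_ball, dist_eq_norm] at hz
    have : r ≤ thet n ^ (k+2) * h := div_le_self (by positivity) (by linarith)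
    linarith
  have hST : ∀ x ∈ S k, ball x r ⊆ T k := by
    intro x hx y hy
    simp only [S, T, mem_ofPred_eq] at hx ⊢
    have e : WithLp.ofLp (y - c) = WithLp.ofLp (y - x) + WithLp.ofLp (x - c) := by
      rw [← WithLp.ofLp_add]; congr 1; abel
    have e' : WithLp.ofLp (x - c) = WithLp.ofLp (x - y) + WithLp.ofLp (y - c) := by
      rw [← WithLp.ofLp_add]; congr 1; abel
    have h1 := norm_add_le (WithLp.ofLp (y - x)) (WithLp.ofLp (x - c))
    have h1' := norm_add_le (WithLp.ofLp (x - y)) (WithLp.ofLp (y - c))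
    rw [← e] at h1
    rw [← e'] at h1'
    have h2 := q_le (y - x)
    have h2' := q_le (x - y)
    have hy' := hy
    rw [mem_ball, dist_eq_norm] at hy
    rw [mem_ball, dist_comm, dist_eq_norm] at hy'
    have a1 : thet n ^ (k+2) * h * (1 - thet n) ≤ thet n ^ (k+1) * h * (1 - thet n) := by
      have : 0 ≤ 1 - thet n := by linarith
      have : thet n ^ (k+2) ≤ thet n ^ (k+1) := pow_le_pow_of_le_one ht0.le ht1.le (by omega)
      gcongr
    have a2 : thet n ^ (k+2) * h * (1 - thet n) ≤ thet n ^ k * h := by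
      have : thet n ^ (k+2) ≤ thet n ^ k := pow_le_pow_of_le_one ht0.le ht1.le (by omega)
      calc _ ≤ thet n ^ k * h * 1 := by
            have : 1 - thet n ≤ 1 := by linarith
            have : 0 ≤ 1 - thet n := by linarith
            gcongr
        _ = _ := by ring
    have a3 : thet n ^ (k+2) = thet n ^ (k+1) * thet n := by ring
    constructor
    · linarith
    · rw [a3] at hr1 a1 ⊢
      linarith
  have hSΩ : S k ⊆ blockDomain n := fun x hx => hTΩ x (hST x hx (mem_ball_self hr0))
    (mem_ball_self hr0)
  have hSm : MeasurableSet (S k) :=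
    (isClosed_le continuous_const (cont_q c)).measurableSet.inter
      (isOpen_lt (cont_q c) continuous_const).measurableSet
  have hTm : MeasurableSet (T k) :=
    (isClosed_le continuous_const (cont_q c)).measurableSet.inter
      (isClosed_le (cont_q c) continuous_const).measurableSet
  have key := tonelli hr0 hSm hTm hST hSΩ hTΩ hfm
    (K := (ENNReal.ofReal ((1 + 6 * (4 * n) ^ n + 4 * 6 ^ n) * (m + 1) * (k + 1)) * M) ^ s) ?_
  · refine key.trans ?_
    gcongr
    refine le_trans (measure_mono ?_) ((vol_shell hn c hp hk0).trans (le_of_eq (by rw [he2])))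
    intro z hz
    simp only [T, mem_ofPred_eq] at hz ⊢
    refine ⟨hz.1, hz.2.trans_lt ?_⟩
    have : 0 < thet n ^ (k+2) * h := by positivity
    linarith
  · intro y hy
    have b0 := hTΩ y hy
    have b1 := shift hs (measure_ball_pos volume y hr0).ne' measure_ball_lt_top.ne
      (hu.mono_set b0) (⨍ z in ball y r, u z) c0
    rw [← lsAvg_eq hs, ← lsInt_eq hs] at b1
    have b2 := hB y r hr0 b0
    have b3 := cube_chain hn H c hp hΩ (k+2) y hy.2
    have b4 := ctr_chain H hm
    rw [← hc, ← hh, ← hc0] at b4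
    rw [← hr] at b3
    have b5 := b1.trans (add_le_add b2 ((edist_triangle _ _ _).trans (add_le_add b3 b4)))
    have b6 : ((volume (ball y r))⁻¹ * ∫⁻ z in ball y r, f z) ^ (1/s) ≤
        ENNReal.ofReal ((1 + 6 * (4 * n) ^ n + 4 * 6 ^ n) * (m + 1) * (k + 1)) * M := by
      refine b5.trans ?_
      nth_rewrite 1 [← one_mul M]
      rw [← ENNReal.ofReal_one, ← add_mul, ← add_mul,
        ← ENNReal.ofReal_add (by positivity) (by positivity),
        ← ENNReal.ofReal_add (by positivity) (by positivity)]
      gcongr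
      have z1 : 0 ≤ (4 * (n:ℝ)) ^ n := by positivity
      have z2 : (0:ℝ) ≤ 6 ^ n := by positivity
      have z3 : (0:ℝ) ≤ k := by positivity
      have z4 : (0:ℝ) ≤ m := by positivity
      have y1 : (1:ℝ) ≤ (m+1)*(k+1) := by nlinarith
      have y2 : (k:ℝ)+1 ≤ (m+1)*(k+1) := by nlinarith
      have y3 : (m:ℝ) ≤ (m+1)*(k+1) := by nlinarith
      have x2 := mul_le_mul_of_nonneg_left y2 z1
      have x3 := mul_le_mul_of_nonneg_left y3 z2
      have x4 : 0 ≤ k * (4 * (n:ℝ)) ^ n := by positivity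
      push_cast
      nlinarith
    rw [one_div, ENNReal.rpow_inv_le_iff hs0] at b6
    exact b6

lemma sufficiency (n : ℕ) [NeZero n] (hn : 2 ≤ n) (s : ℝ) (hs : 1 ≤ s)
    (h : s < n * Real.logb 2 3 - 1) : IsLsAveragingDomain s (blockDomain n) := by
  have hs0 : 0 < s := by linarith
  set A := ∑' i : ℕ, ENNReal.ofReal (blockEdge (i+1) ^ n * ((i : ℝ) + 2) ^ s) with hA
  set B := ∑' k : ℕ, ENNReal.ofReal (thet n ^ k * ((k : ℝ) + 1) ^ s) with hBdef
  have hAt : A ≠ ⊤ := (summable_edge hs h).tsum_ofReal_ne_top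
  have hBt : B ≠ ⊤ := (summable_thet hn s).tsum_ofReal_ne_top
  set K : ℝ := 1 + 6 * (4 * n) ^ n + 4 * 6 ^ n with hK
  have hK0 : 0 ≤ K := by positivity
  set G := ENNReal.ofReal (2 * n * K ^ s) * (A * B) with hG
  have hGt : G ≠ ⊤ := ENNReal.mul_ne_top ENNReal.ofReal_ne_top (ENNReal.mul_ne_top hAt hBt)
  have hV0 := vol_domain_ne_zero n
  have hVt := vol_domain_ne_top n hn
  set D := ((volume (blockDomain n))⁻¹ * G) ^ (1/s) with hD
  have hDt : D ≠ ⊤ := ENNReal.rpow_ne_top_of_nonneg (by positivity)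
    (ENNReal.mul_ne_top (ENNReal.inv_ne_top.2 hV0) hGt)
  refine ⟨2 * D + 1, by finiteness, fun u hu => ?_⟩
  set M := ⨆ (x : EuclideanSpace ℝ (Fin n)) (ρ : ℝ) (_ : 0 < ρ ∧ ball x ρ ⊆ blockDomain n),
          (lsAvgE s u (ball x ρ)) ^ (1/s) with hMdef
  by_cases hM : M = ⊤
  · rw [hM, ENNReal.mul_top (by simp)]; exact le_top
  have hB : ∀ x r, 0 < r → ball x r ⊆ blockDomain n → (lsAvgE s u (ball x r)) ^ (1/s) ≤ M := by
    intro x r hr hx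
    rw [hMdef]
    exact le_iSup_of_le x (le_iSup_of_le r (le_iSup_of_le ⟨hr, hx⟩ le_rfl))
  have hum : AEStronglyMeasurable u (volume.restrict (blockDomain n)) := hu.aestronglyMeasurable
  set c0 := ⨍ y in ball (ctr n 1) (blockEdge 1 / 2), u y with hc0
  have hintg : ∫⁻ z in blockDomain n, ENNReal.ofReal (|u z - c0| ^ s) ≤ G * M ^ s := by
    refine (lintegral_mono_set (domain_sub_iUnion n)).trans ((lintegral_iUnion_le _ _).trans ?_)
    refine (ENNReal.tsum_le_tsum fun i => cube_int hn hs hum hM hB (m := i+1) (by omega)).trans ?_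
    have e : ∀ i k : ℕ, ENNReal.ofReal (blockEdge (i+1) ^ n * (2 * n * thet n ^ k)) *
      (ENNReal.ofReal (K * ((i + 1 : ℕ) + 1) * (k + 1)) * M) ^ s =
      (ENNReal.ofReal (2 * n * K ^ s) * M ^ s *
        ENNReal.ofReal (blockEdge (i+1) ^ n * ((i : ℝ) + 2) ^ s)) *
        ENNReal.ofReal (thet n ^ k * ((k : ℝ) + 1) ^ s) := by
      intro i k
      have h1 := edge_pos (i+1)
      have h2 : 0 < thet n := by linarith [thet_lo hn]
      rw [ENNReal.mul_rpow_of_nonneg _ _ hs0.le, ENNReal.ofReal_rpow_of_nonneg (by positivity) hs0.le,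
        Real.mul_rpow (by positivity) (by positivity), Real.mul_rpow (by positivity) (by positivity)]
      rw [show (((i + 1 : ℕ) : ℝ) + 1) = i + 2 by push_cast; ring]
      calc _ = (ENNReal.ofReal (blockEdge (i+1) ^ n * (2 * n * thet n ^ k)) *
          ENNReal.ofReal (K ^ s * ((i:ℝ) + 2) ^ s * ((k:ℝ) + 1) ^ s)) * M ^ s := by ring
        _ = (ENNReal.ofReal (2 * n * K ^ s) *
        ENNReal.ofReal (blockEdge (i+1) ^ n * ((i : ℝ) + 2) ^ s) *
        ENNReal.ofReal (thet n ^ k * ((k : ℝ) + 1) ^ s)) * M ^ s := by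
          congr 1
          rw [← ENNReal.ofReal_mul (by positivity), ← ENNReal.ofReal_mul (by positivity),
            ← ENNReal.ofReal_mul (by positivity)]
          congr 1; ring
        _ = _ := by ring
    simp_rw [← hK, e, ENNReal.tsum_mul_left, ENNReal.tsum_mul_right, ENNReal.tsum_mul_left]
    rw [← hA, ← hBdef, hG]
    apply le_of_eq; ring
  have hfin : eLpNorm (fun z => u z - c0) (ENNReal.ofReal s) (nrm (blockDomain n)) ≤ D * M := by
    rw [← lsInt_eq hs]
    calc _ ≤ ((volume (blockDomain n))⁻¹ * (G * M ^ s)) ^ (1/s) := by gcongr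
      _ = D * M := by
        rw [← mul_assoc, ENNReal.mul_rpow_of_nonneg _ _ (by positivity), ← hD, ← ENNReal.rpow_mul,
          mul_one_div_cancel hs0.ne', ENNReal.rpow_one]
  refine (recenter hs hV0 hVt hum c0 (ENNReal.mul_ne_top hDt hM) hfin).trans ?_
  rw [← mul_assoc]
  gcongr
  exact le_self_add

/-! ### Necessity -/

noncomputable def bet : ℝ := Real.logb (3/2) 2

lemma bet_pos : 0 < bet := Real.logb_pos (by norm_num) (by norm_num)

lemma bet_pow : (3/2 : ℝ) ^ bet = 2 :=
  Real.rpow_logb (by norm_num) (by norm_num) (by norm_num)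

lemma bet_pow' : (2/3 : ℝ) ^ (-bet) = 2 := by
  rw [show (2/3 : ℝ) = (3/2)⁻¹ by norm_num, Real.inv_rpow (by norm_num),
    Real.rpow_neg (by norm_num), inv_inv, bet_pow]

lemma alp_pow : (2/3 : ℝ) ^ (bet + 1) = 1/3 := by
  rw [show (2/3 : ℝ) = (3/2)⁻¹ by norm_num, Real.inv_rpow (by norm_num),
    Real.rpow_add (by norm_num), bet_pow]
  norm_num

lemma bottom_mono {a b : ℕ} (ha : 1 ≤ a) (h : a ≤ b) : blockBottom a ≤ blockBottom b := by
  induction b, h using Nat.le_induction with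
  | base => exact le_rfl
  | succ b hb ih =>
    rw [bottom_succ (by omega)]
    linarith [edge_pos b]

lemma bottom_pow (j : ℕ) : blockBottom (2 ^ j) = 3 * (1 - (2/3) ^ j) := by
  induction j with
  | zero => simp [blockBottom]
  | succ j ih =>
    have h1 : 1 ≤ 2 ^ j := Nat.one_le_two_pow
    have h2 : 2 ^ j ≤ 2 ^ (j+1) := Nat.pow_le_pow_right (by norm_num) (by omega)
    have e : blockBottom (2 ^ (j+1)) =
        blockBottom (2 ^ j) + ∑ i ∈ Finset.Ico (2 ^ j) (2 ^ (j+1)), blockEdge i := by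
      unfold blockBottom
      rw [Finset.sum_Ico_consecutive _ h1 h2]
    have e2 : ∑ i ∈ Finset.Ico (2 ^ j) (2 ^ (j+1)), blockEdge i = (2/3 : ℝ) ^ j := by
      rw [Finset.sum_congr rfl (g := fun _ => (1/3 : ℝ) ^ j)]
      · rw [Finset.sum_const, Nat.card_Ico, pow_succ, mul_two, Nat.add_sub_cancel, nsmul_eq_mul]
        push_cast
        rw [← mul_pow]; norm_num
      · intro i hi
        rw [Finset.mem_Ico] at hi
        rw [blockEdge, Nat.log_eq_of_pow_le_of_lt_pow hi.1 hi.2]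
    rw [e, e2, ih]; ring

lemma bottom_hi {m : ℕ} (hm : 1 ≤ m) :
    blockBottom m + blockEdge m ≤ 3 - 2 * (2/3) ^ (Nat.log 2 m) := by
  have h1 := Nat.lt_pow_succ_log_self (b := 2) (by norm_num) m
  rw [← bottom_succ hm]
  refine (bottom_mono (by omega) (Nat.succ_le_of_lt h1)).trans ?_
  rw [Nat.succ_eq_add_one, bottom_pow, pow_succ]
  linarith

lemma bottom_lo {m : ℕ} (hm : 1 ≤ m) : 3 - 3 * (2/3) ^ (Nat.log 2 m) ≤ blockBottom m := by
  have h1 : 2 ^ Nat.log 2 m ≤ m := Nat.pow_log_le_self 2 (by omega)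
  refine le_trans ?_ (bottom_mono Nat.one_le_two_pow h1)
  rw [bottom_pow]
  linarith

lemma domain_geom {n : ℕ} [NeZero n] {z : EuclideanSpace ℝ (Fin n)} (hz : z ∈ blockDomain n) :
    z 0 < 3 ∧ ∀ i : Fin n, i ≠ 0 → |z i - 1/2| ≤ (3 - z 0) ^ (bet + 1) / 2 := by
  obtain ⟨m, hm, h0, hi⟩ := domain_sub hz
  have hb := bottom_hi hm
  have hp : (0:ℝ) < (2/3) ^ (Nat.log 2 m) := by positivity
  have h3 : (2/3 : ℝ) ^ (Nat.log 2 m) ≤ 3 - z 0 := by linarith [h0.2]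
  refine ⟨by linarith, fun i hne => (hi i hne).trans ?_⟩
  have : blockEdge m ≤ (3 - z 0) ^ (bet + 1) := by
    calc blockEdge m = ((2/3 : ℝ) ^ (bet + 1)) ^ (Nat.log 2 m) := by rw [alp_pow, blockEdge]
      _ = ((2/3 : ℝ) ^ (Nat.log 2 m)) ^ (bet + 1) := by
        rw [← Real.rpow_natCast, ← Real.rpow_natCast, ← Real.rpow_mul (by norm_num),
          ← Real.rpow_mul (by norm_num), mul_comm]
      _ ≤ _ := by
        have := bet_pos
        gcongr
  linarith

lemma ball_geom {n : ℕ} [NeZero n] (hn : 2 ≤ n) {x : EuclideanSpace ℝ (Fin n)} {ρ : ℝ}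
    (hB : ball x ρ ⊆ blockDomain n) {t : ℝ} (ht : |t| < ρ) :
    0 < 3 - x 0 - t ∧ √(ρ ^ 2 - t ^ 2) ≤ (3 - x 0 - t) ^ (bet + 1) := by
  have hρ : 0 < ρ := (abs_nonneg t).trans_lt ht
  have hsq : t ^ 2 < ρ ^ 2 := sq_lt_sq.2 (by rwa [abs_of_pos hρ])
  let i1 : Fin n := ⟨1, by omega⟩
  have hi1 : i1 ≠ 0 := by
    intro h
    have := congrArg Fin.val h
    simp [i1] at this
  have hi1' : (0 : Fin n) ≠ i1 := hi1.symm
  have key : ∀ w : ℝ, t ^ 2 + w ^ 2 < ρ ^ 2 →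
      0 < 3 - x 0 - t ∧ |x i1 + w - 1/2| ≤ (3 - x 0 - t) ^ (bet + 1) / 2 := by
    intro w hw
    set y : EuclideanSpace ℝ (Fin n) :=
      x + (EuclideanSpace.single 0 t + EuclideanSpace.single i1 w) with hy
    have hyB : y ∈ ball x ρ := by
      rw [mem_ball, dist_eq_norm, hy, add_sub_cancel_left]
      apply lt_of_pow_lt_pow_left₀ 2 hρ.le
      rw [EuclideanSpace.norm_sq_eq, Finset.sum_eq_add (0 : Fin n) i1 hi1']
      · simpa [hi1, hi1'] using hw
      · intro c _ hc; simp [hc.1, hc.2]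
      · simp
      · simp
    have := domain_geom (hB hyB)
    have h0 : y 0 = x 0 + t := by simp [hy, hi1']
    have h1 : y i1 = x i1 + w := by simp [hy, hi1]
    have h2 := this.2 i1 hi1
    rw [h0, h1] at h2
    rw [h0] at this
    rw [show 3 - x 0 - t = 3 - (x 0 + t) by ring]
    exact ⟨by linarith [this.1], h2⟩
  have hw : (√(ρ ^ 2 - t ^ 2)) ^ 2 = ρ ^ 2 - t ^ 2 := Real.sq_sqrt (by linarith)
  have k1 := key (√(ρ ^ 2 - t ^ 2) / 2) (by rw [div_pow, hw]; linarith)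
  have k2 := key (-(√(ρ ^ 2 - t ^ 2) / 2)) (by rw [neg_sq, div_pow, hw]; linarith)
  refine ⟨k1.1, ?_⟩
  have a1 := (abs_le.1 k1.2).2
  have a2 := (abs_le.1 k2.2).1
  linarith

lemma osc_bd {n : ℕ} [NeZero n] (hn : 2 ≤ n) {x : EuclideanSpace ℝ (Fin n)} {ρ : ℝ}
    (hρ : 0 < ρ) (hB : ball x ρ ⊆ blockDomain n) {a b : ℝ} (ha : -ρ < a) (hab : a ≤ b)
    (hb : b < ρ) :
    |(3 - x 0 - b) ^ (-bet) - (3 - x 0 - a) ^ (-bet)| ≤ bet * Real.pi := by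
  have hbet := bet_pos
  set G : ℝ → ℝ := fun t => (3 - x 0 - t) ^ (-bet) - bet * Real.arcsin (t / ρ) with hG
  set G' : ℝ → ℝ := fun t => (-1) * (-bet) * (3 - x 0 - t) ^ (-bet - 1) -
    bet * (1 / √(1 - (t / ρ) ^ 2) * (1 / ρ)) with hG'
  have hd : ∀ t ∈ Ioo (-ρ) ρ, HasDerivAt G (G' t) t := by
    intro t ht
    have g := ball_geom hn hB (abs_lt.2 ht)
    apply HasDerivAt.sub
    · have h1 : HasDerivAt (fun t => 3 - x 0 - t) (-1) t := by
        simpa using (hasDerivAt_id t).const_sub (3 - x 0)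
      exact h1.rpow_const (Or.inl g.1.ne')
    · apply HasDerivAt.const_mul
      have h2 : HasDerivAt (fun t => t / ρ) (1 / ρ) t := (hasDerivAt_id t).div_const ρ
      have n1 : t / ρ ≠ -1 := by
        intro h; rw [div_eq_iff hρ.ne'] at h; linarith [ht.1]
      have n2 : t / ρ ≠ 1 := by
        intro h; rw [div_eq_iff hρ.ne'] at h; linarith [ht.2]
      exact (Real.hasDerivAt_arcsin n1 n2).comp t h2
  have hle : ∀ t ∈ Ioo (-ρ) ρ, G' t ≤ 0 := by
    intro t ht
    have g := ball_geom hn hB (abs_lt.2 ht)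
    have hsq : t ^ 2 < ρ ^ 2 := sq_lt_sq.2 (by rw [abs_of_pos hρ]; exact abs_lt.2 ht)
    have e1 : √(1 - (t / ρ) ^ 2) * ρ = √(ρ ^ 2 - t ^ 2) := by
      rw [show ρ ^ 2 - t ^ 2 = (1 - (t / ρ) ^ 2) * ρ ^ 2 by field_simp,
        Real.sqrt_mul' _ (by positivity), Real.sqrt_sq hρ.le]
    have hpos : 0 < √(ρ ^ 2 - t ^ 2) := Real.sqrt_pos.2 (by linarith)
    have e2 : 1 / √(1 - (t / ρ) ^ 2) * (1 / ρ) = 1 / √(ρ ^ 2 - t ^ 2) := by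
      rw [← e1, one_div_mul_one_div]
    have e3 : (3 - x 0 - t) ^ (-bet - 1) ≤ 1 / √(ρ ^ 2 - t ^ 2) := by
      rw [show -bet - 1 = -(bet + 1) by ring, Real.rpow_neg g.1.le, one_div]
      exact inv_anti₀ hpos g.2
    simp only [hG']
    rw [e2]
    nlinarith
  have hanti : AntitoneOn G (Ioo (-ρ) ρ) := by
    apply antitoneOn_of_deriv_nonpos (convex_Ioo _ _)
    · exact fun t ht => (hd t ht).continuousAt.continuousWithinAt
    · rw [interior_Ioo]
      exact fun t ht => (hd t ht).differentiableAt.differentiableWithinAt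
    · rw [interior_Ioo]
      exact fun t ht => by rw [(hd t ht).deriv]; exact hle t ht
  have hma : a ∈ Ioo (-ρ) ρ := ⟨ha, by linarith⟩
  have hmb : b ∈ Ioo (-ρ) ρ := ⟨by linarith, hb⟩
  have h1 := hanti hma hmb hab
  simp only [hG] at h1
  have gb := (ball_geom hn hB (abs_lt.2 hmb)).1
  have h2 : (3 - x 0 - a) ^ (-bet) ≤ (3 - x 0 - b) ^ (-bet) :=
    Real.rpow_le_rpow_of_nonpos gb (by linarith) (by linarith)
  rw [abs_of_nonneg (by linarith)]
  have h3 := Real.arcsin_le_pi_div_two (b / ρ)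
  have h4 := Real.neg_pi_div_two_le_arcsin (a / ρ)
  nlinarith

noncomputable def testFn (n : ℕ) [NeZero n] : EuclideanSpace ℝ (Fin n) → ℝ :=
  fun z => (3 - z 0) ^ (-bet)

lemma testFn_meas (n : ℕ) [NeZero n] : Measurable (testFn n) := by
  unfold testFn; fun_prop

lemma testFn_osc {n : ℕ} [NeZero n] (hn : 2 ≤ n) {s : ℝ} (hs : 1 ≤ s)
    {x : EuclideanSpace ℝ (Fin n)} {ρ : ℝ}
    (hρ : 0 < ρ) (hB : ball x ρ ⊆ blockDomain n) :
    (lsAvgE s (testFn n) (ball x ρ)) ^ (1/s) ≤ 2 * ENNReal.ofReal (bet * Real.pi) := by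
  have v0 := (measure_ball_pos volume x hρ).ne'
  have v1 : volume (ball x ρ) ≠ ⊤ := measure_ball_lt_top.ne
  have hpr := nrm_prob v0 v1
  apply recenter hs v0 v1 (testFn_meas n).aestronglyMeasurable (testFn n x) ENNReal.ofReal_ne_top
  have hae : ∀ᵐ z ∂(nrm (ball x ρ)), ‖testFn n z - testFn n x‖ ≤ bet * Real.pi := by
    unfold nrm
    apply Measure.ae_smul_measure
    filter_upwards [ae_restrict_mem measurableSet_ball] with z hz
    have hc := abs_lt.1 (coord_lt hz 0)
    rw [Real.norm_eq_abs]
    have e1 : testFn n z = (3 - x 0 - (z 0 - x 0)) ^ (-bet) := by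
      unfold testFn; congr 1; ring
    have e2 : testFn n x = (3 - x 0 - 0) ^ (-bet) := by unfold testFn; congr 1; ring
    rw [e1, e2]
    rcases le_total 0 (z 0 - x 0) with h | h
    · exact osc_bd hn hρ hB (by linarith) h hc.2
    · rw [abs_sub_comm]
      exact osc_bd hn hρ hB (by linarith) h (by linarith)
  refine (eLpNorm_le_of_ae_bound hae).trans ?_
  simp

lemma openCube_disj (n : ℕ) [NeZero n] : Pairwise (Function.onFun Disjoint fun i : ℕ =>
    {z : EuclideanSpace ℝ (Fin n) | ‖WithLp.ofLp (z - ctr n (i+1))‖ < blockEdge (i+1) / 2}) := by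
  have key : ∀ (i : ℕ) (z : EuclideanSpace ℝ (Fin n)),
      ‖WithLp.ofLp (z - ctr n (i+1))‖ < blockEdge (i+1) / 2 →
      blockBottom (i+1) < z 0 ∧ z 0 < blockBottom (i+1+1) := by
    intro i z hz
    have h1 := (norm_le_pi_norm (WithLp.ofLp (z - ctr n (i+1))) 0).trans_lt hz
    rw [WithLp.ofLp_sub, Pi.sub_apply, ctr, axis_zero, Real.norm_eq_abs, abs_lt] at h1
    rw [bottom_succ (m := i+1) (by omega)]
    constructor <;> linarith [h1.1, h1.2]
  have main : ∀ i j : ℕ, i < j → Disjoint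
    {z : EuclideanSpace ℝ (Fin n) | ‖WithLp.ofLp (z - ctr n (i+1))‖ < blockEdge (i+1) / 2}
    {z : EuclideanSpace ℝ (Fin n) | ‖WithLp.ofLp (z - ctr n (j+1))‖ < blockEdge (j+1) / 2} := by
    intro i j hij
    rw [Set.disjoint_left]
    intro z hz hz'
    have h1 := (key i z hz).2
    have h2 := (key j z hz').1
    have h3 := bottom_mono (a := i+1+1) (b := j+1) (by omega) (by omega)
    linarith
  intro i j hij
  rcases lt_or_gt_of_ne hij with h | h
  · exact main i j h
  · exact (main j i h).symm

lemma tsum_harm : ∑' i : ℕ, ENNReal.ofReal (1 / ((i + 1 : ℕ) : ℝ)) = ⊤ := by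
  by_contra h
  have h1 := ENNReal.summable_toReal h
  have h2 : Summable (fun i : ℕ => 1 / ((i + 1 : ℕ) : ℝ)) := by
    refine h1.congr (fun i => ?_)
    rw [ENNReal.toReal_ofReal (by positivity)]
  exact Real.not_summable_one_div_natCast ((summable_nat_add_iff 1).1 h2)

lemma testFn_lower {n : ℕ} [NeZero n] {m : ℕ} (hm : 1 ≤ m) {z : EuclideanSpace ℝ (Fin n)}
    (hz : z ∈ blockCube n m) : 3 ^ (-bet) * 2 ^ (Nat.log 2 m) ≤ testFn n z := by
  have h1 := bottom_lo hm
  have h2 := bottom_hi hm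
  have hp : (0:ℝ) < (2/3) ^ (Nat.log 2 m) := by positivity
  have h3 : 0 < 3 - z 0 := by linarith [hz.1.2]
  have h4 : 3 - z 0 ≤ 3 * (2/3) ^ (Nat.log 2 m) := by linarith [hz.1.1]
  calc (3:ℝ) ^ (-bet) * 2 ^ (Nat.log 2 m)
      = 3 ^ (-bet) * ((2/3 : ℝ) ^ (-bet)) ^ (Nat.log 2 m) := by rw [bet_pow']
    _ = 3 ^ (-bet) * ((2/3 : ℝ) ^ (Nat.log 2 m)) ^ (-bet) := by
        congr 1
        rw [← Real.rpow_natCast, ← Real.rpow_natCast, ← Real.rpow_mul (by norm_num),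
          ← Real.rpow_mul (by norm_num), mul_comm]
    _ = (3 * (2/3) ^ (Nat.log 2 m)) ^ (-bet) := by
        rw [Real.mul_rpow (by norm_num) hp.le]
    _ ≤ _ := Real.rpow_le_rpow_of_nonpos h3 h4 (by linarith [bet_pos])

lemma testFn_int (n : ℕ) [NeZero n] {s : ℝ} (hs : 1 ≤ s)
    (h : n * Real.logb 2 3 - 1 ≤ s) :
    ∫⁻ z in blockDomain n, ENNReal.ofReal (|testFn n z - 0| ^ s) = ⊤ := by
  have hs0 : 0 < s := by linarith
  rw [eq_top_iff]
  set κ : ℝ := ((3:ℝ) ^ (-bet)) ^ s with hκ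
  have hκ0 : 0 < κ := by positivity
  let U : ℕ → Set (EuclideanSpace ℝ (Fin n)) := fun i =>
    {z : EuclideanSpace ℝ (Fin n) | ‖WithLp.ofLp (z - ctr n (i+1))‖ < blockEdge (i+1) / 2}
  have hUm : ∀ i, MeasurableSet (U i) := fun i =>
    (isOpen_lt (cont_q _) continuous_const).measurableSet
  have hterm : ∀ i : ℕ, ENNReal.ofReal κ * ENNReal.ofReal (1 / ((i + 1 : ℕ) : ℝ)) ≤
      ∫⁻ z in U i, ENNReal.ofReal (|testFn n z - 0| ^ s) := by
    intro i
    have he := edge_pos (i+1)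
    set j := Nat.log 2 (i+1) with hj
    have hlow : ∀ z ∈ U i, ENNReal.ofReal (κ * ((2:ℝ) ^ j) ^ s) ≤
        ENNReal.ofReal (|testFn n z - 0| ^ s) := by
      intro z hz
      apply ENNReal.ofReal_le_ofReal
      have hz' : z ∈ blockCube n (i+1) := by
        rw [cube_eq]
        exact le_of_lt (show ‖WithLp.ofLp (z - ctr n (i+1))‖ < blockEdge (i+1) / 2 from hz)
      have := testFn_lower (by omega) hz'
      rw [hκ, ← Real.mul_rpow (by positivity) (by positivity), sub_zero]
      apply Real.rpow_le_rpow (by positivity) _ hs0.le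
      exact this.trans (le_abs_self _)
    have hvol : volume (U i) = ENNReal.ofReal (blockEdge (i+1) ^ n) := by
      simp only [U]
      rw [vol_q_lt _ (by positivity)]
      congr 2; ring
    calc _ ≤ ENNReal.ofReal (κ * ((2:ℝ) ^ j) ^ s) * volume (U i) := by
          rw [hvol, ← ENNReal.ofReal_mul hκ0.le, ← ENNReal.ofReal_mul (by positivity)]
          apply ENNReal.ofReal_le_ofReal
          rw [mul_assoc]
          gcongr
          have p1 : (3:ℝ) ^ n ≤ 2 ^ (s + 1) := by
            calc (3:ℝ) ^ n = ((2:ℝ) ^ Real.logb 2 3) ^ n := by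
                  rw [Real.rpow_logb (by norm_num) (by norm_num) (by norm_num)]
              _ = (2:ℝ) ^ (n * Real.logb 2 3) := by
                  rw [← Real.rpow_natCast, ← Real.rpow_mul (by norm_num), mul_comm]
              _ ≤ _ := Real.rpow_le_rpow_of_exponent_le (by norm_num) (by linarith)
          have p2 : ((3:ℝ) ^ n) ^ j ≤ ((2:ℝ) ^ (s+1)) ^ j := by gcongr
          have p3 : ((2:ℝ) ^ (s+1)) ^ j = ((2:ℝ) ^ j) ^ s * 2 ^ j := by
            rw [← Real.rpow_natCast, ← Real.rpow_mul (by norm_num), ← Real.rpow_natCast 2 j,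
              ← Real.rpow_mul (by norm_num), ← Real.rpow_add (by norm_num)]
            congr 1; ring
          have p4 : (2:ℝ) ^ j ≤ ((i + 1 : ℕ) : ℝ) := by
            exact_mod_cast Nat.pow_log_le_self 2 (by omega)
          have p5 : blockEdge (i+1) ^ n = (((3:ℝ) ^ n) ^ j)⁻¹ := by
            rw [blockEdge, ← hj, one_div, inv_pow, inv_pow, ← pow_mul, ← pow_mul, mul_comm]
          rw [p5, ← div_eq_mul_inv, div_le_div_iff₀ (by positivity) (by positivity), one_mul]
          rw [p3] at p2
          exact p2.trans (by gcongr)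
      _ = ∫⁻ z in U i, ENNReal.ofReal (κ * ((2:ℝ) ^ j) ^ s) := by simp
      _ ≤ _ := setLIntegral_mono' (hUm i) hlow
  calc (⊤ : ℝ≥0∞) = ∑' i : ℕ, ENNReal.ofReal κ * ENNReal.ofReal (1 / ((i + 1 : ℕ) : ℝ)) := by
        rw [ENNReal.tsum_mul_left, tsum_harm, ENNReal.mul_top]
        simpa using hκ0
    _ ≤ ∑' i, ∫⁻ z in U i, ENNReal.ofReal (|testFn n z - 0| ^ s) := ENNReal.tsum_le_tsum hterm
    _ = ∫⁻ z in ⋃ i, U i, ENNReal.ofReal (|testFn n z - 0| ^ s) :=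
        (lintegral_iUnion hUm (openCube_disj n) _).symm
    _ ≤ _ := lintegral_mono_set (iUnion_subset fun i => openCube_sub (by omega))

lemma necessity (n : ℕ) [NeZero n] (hn : 2 ≤ n) (s : ℝ) (hs : 1 ≤ s)
    (hav : IsLsAveragingDomain s (blockDomain n)) : s < n * Real.logb 2 3 - 1 := by
  by_contra hcon
  push Not at hcon
  have hs0 : 0 < s := by linarith
  obtain ⟨C, hC, h⟩ := hav
  have hV0 := vol_domain_ne_zero n
  have hVt := vol_domain_ne_top n hn
  have hloc : LocallyIntegrableOn (testFn n) (blockDomain n) volume := by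
    apply ContinuousOn.locallyIntegrableOn _ isOpen_interior.measurableSet
    unfold testFn
    apply ContinuousOn.rpow_const
    · fun_prop
    · intro z hz
      left
      have := (domain_geom hz).1
      linarith
  have h1 := h _ hloc
  have h2 : (lsAvgE s (testFn n) (blockDomain n)) ^ (1/s) ≤
      C * (2 * ENNReal.ofReal (bet * Real.pi)) := by
    refine h1.trans ?_
    gcongr
    exact iSup_le fun x => iSup_le fun ρ => iSup_le fun hx => testFn_osc hn hs hx.1 hx.2
  rw [lsAvg_eq hs] at h2
  have h3 := shift hs hV0 hVt ((testFn_meas n).aestronglyMeasurable)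
    (⨍ y in blockDomain n, testFn n y) 0
  rw [← lsInt_eq hs, testFn_int n hs hcon, ENNReal.mul_top (by simpa using hVt),
    ENNReal.top_rpow_of_pos (by positivity), top_le_iff] at h3
  have h4 : C * (2 * ENNReal.ofReal (bet * Real.pi)) ≠ ⊤ := by finiteness
  exact (ENNReal.add_ne_top.2 ⟨ne_top_of_le_ne_top h4 h2, edist_ne_top _ _⟩) h3

/-- The block domain is `L^s`-averaging iff `s < n·log₂ 3 − 1`. -/
theorem blockDomain_LsAveraging_iff (n : ℕ) [NeZero n] (hn : 2 ≤ n) (s : ℝ) (hs : 1 ≤ s) :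
    IsLsAveragingDomain s (blockDomain n) ↔ s < n * Real.logb 2 3 - 1 := by
  exact ⟨necessity n hn s hs, sufficiency n hn s hs⟩
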